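/- (Brezis–Li–Shafrir sup + inf inequality for Lipschitz coefficients.) Let Ω ⊂ ℝ² be an open set, 0 < a ≤ b < +∞, A > 0, and K ⊂ Ω a compact set. Then there exists a constant c = c(a, b, A, K, Ω) such that for every function V : Ω → ℝ with a ≤ V(x) ≤ b for all x ∈ Ω and |V(x) − V(y)| ≤ A|x − y| for all x, y ∈ Ω, and every C² function u on Ω satisfying −Δu = V e^u in Ω, one has sup_K u + inf_Ω u ≤ c. -/

import Mathlib

open MeasureTheory Filter Metric

abbrev E2 := EuclideanSpace ℝ (Fin 2)

noncomputable def pd (j : Fin 2) (u : E2 → ℝ) (x : E2) : ℝ :=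
  fderiv ℝ u x (EuclideanSpace.single j 1)

noncomputable def lapl (u : E2 → ℝ) (x : E2) : ℝ :=
  pd 0 (pd 0 u) x + pd 1 (pd 1 u) x


lemma second_deriv_nonneg {f f' : ℝ → ℝ} {x c : ℝ} (hmin : IsLocalMin f x)
    (h1 : ∀ᶠ y in nhds x, HasDerivAt f (f' y) y) (h2 : HasDerivAt f' c x) : 0 ≤ c := by
  by_contra hc
  push Not at hc
  have hd : deriv f =ᶠ[nhds x] f' := h1.mono (fun y hy => hy.deriv)
  have hdd : deriv (deriv f) x = c := by
    rw [hd.deriv_eq]; exact h2.deriv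
  have hmax : IsLocalMax f x :=
    isLocalMax_of_deriv_deriv_neg (by rw [hdd]; exact hc) hmin.deriv_eq_zero
      h1.self_of_nhds.continuousAt
  have hconst : f =ᶠ[nhds x] fun _ => f x := by
    filter_upwards [hmin, hmax] with y h3 h4 using le_antisymm h4 h3
  have : deriv f =ᶠ[nhds x] fun _ => 0 := by
    have := hconst.deriv
    simpa using this
  have h5 := this.deriv_eq
  rw [hdd] at h5
  simp at h5
  linarith

/-- reflection of a min -/
lemma hopf_strip {w wt wtt wh whh : ℝ → ℝ → ℝ} {T T1 l : ℝ} (hT : T < T1) (hl : l < T)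
    (h1 : ∀ t < T1, ∀ θ, HasDerivAt (fun t => w t θ) (wt t θ) t)
    (h2 : ∀ t < T1, ∀ θ, HasDerivAt (fun t => wt t θ) (wtt t θ) t)
    (h3 : ∀ t < T1, ∀ θ, HasDerivAt (fun θ => w t θ) (wh t θ) θ)
    (h4 : ∀ t < T1, ∀ θ, HasDerivAt (fun θ => wh t θ) (whh t θ) θ)
    (hc : ∀ p : ℝ × ℝ, p.1 < T1 → ContinuousAt (fun p : ℝ × ℝ => w p.1 p.2) p)
    (hper : ∀ t θ, w t (θ + 2 * Real.pi) = w t θ)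
    (hmon : ∀ s t θ, t ≤ s → s < T1 → w t θ ≤ w s θ →
      wtt s θ + whh s θ ≤ wtt t θ + whh t θ)
    (hbd : ∀ θ, w (2 * l - T) θ < w T θ)
    (hpos : ∀ t θ, 2 * l - T ≤ t → t ≤ l → w t θ ≤ w (2 * l - t) θ) :
    ∃ ε > 0, ∀ t θ, 2 * l - T ≤ t → t ≤ l → ε * (l - t) ≤ w (2 * l - t) θ - w t θ := by
  have hpi := Real.pi_pos
  -- continuity of P on the strip
  have hcP : ContinuousOn (fun p : ℝ × ℝ => w (2 * l - p.1) p.2 - w p.1 p.2)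
      (Set.Icc (2 * l - T) l ×ˢ Set.univ) := by
    rintro ⟨t, θ⟩ ⟨⟨ht1, ht2⟩, -⟩
    simp only at ht1 ht2
    apply ContinuousAt.continuousWithinAt
    apply ContinuousAt.sub
    · have := hc (2 * l - t, θ) (by simp only; linarith)
      exact ContinuousAt.comp (x := ((t, θ) : ℝ × ℝ)) (f := fun p : ℝ × ℝ => (2 * l - p.1, p.2))
        (g := fun p : ℝ × ℝ => w p.1 p.2) this (by fun_prop)
    · exact hc (t, θ) (by simp only; linarith)
  -- positive lower bound at the left end
  obtain ⟨m0, hm0, hm⟩ : ∃ m0 > 0, ∀ θ ∈ Set.Icc 0 (2 * Real.pi),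
      m0 ≤ w T θ - w (2 * l - T) θ := by
    have hcc : ContinuousOn (fun θ => w T θ - w (2 * l - T) θ) (Set.Icc 0 (2 * Real.pi)) := by
      intro θ _
      apply ContinuousAt.continuousWithinAt
      exact ((h3 T hT θ).continuousAt).sub ((h3 (2 * l - T) (by linarith) θ).continuousAt)
    obtain ⟨θ0, -, h0⟩ := isCompact_Icc.exists_isMinOn
      (Set.nonempty_Icc.2 (by positivity : (0:ℝ) ≤ 2 * Real.pi)) hcc
    exact ⟨_, sub_pos.2 (hbd θ0), fun θ hθ => h0 hθ⟩
  set δ := T - l with hδ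
  have hδ0 : 0 < δ := by linarith
  set ε := m0 / (δ + δ ^ 2) with hε
  have hεδ : ε * (δ + δ ^ 2) = m0 := by rw [hε]; field_simp
  have hε0 : 0 < ε := by positivity
  refine ⟨ε, hε0, ?_⟩
  set Q : ℝ × ℝ → ℝ := fun p => w (2 * l - p.1) p.2 - w p.1 p.2
    - ε * ((l - p.1) + (l - p.1) ^ 2) with hQ
  have hQc : ContinuousOn Q (Set.Icc (2 * l - T) l ×ˢ Set.Icc 0 (2 * Real.pi)) := by
    apply ContinuousOn.sub
    · exact hcP.mono (Set.prod_mono le_rfl (Set.subset_univ _))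
    · fun_prop
  obtain ⟨⟨t0, θ0⟩, ⟨⟨ht0, ht0'⟩, hθ0⟩, hmin⟩ := (isCompact_Icc.prod isCompact_Icc).exists_isMinOn
      (Set.Nonempty.prod (Set.nonempty_Icc.2 (by linarith : 2 * l - T ≤ l))
      (Set.nonempty_Icc.2 (by positivity : (0:ℝ) ≤ 2 * Real.pi))) hQc
  simp only at ht0 ht0' hθ0
  -- min over all θ
  have hQper : ∀ t, Function.Periodic (fun θ => Q (t, θ)) (2 * Real.pi) := by
    intro t θ
    simp only [hQ, hper]
  have hmin' : ∀ t θ, 2 * l - T ≤ t → t ≤ l → Q (t0, θ0) ≤ Q (t, θ) := by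
    intro t θ ht ht'
    obtain ⟨y, hy, hyy⟩ := (hQper t).exists_mem_Ico₀ (by positivity) θ
    rw [hyy]
    exact hmin (a := (t, y)) ⟨⟨ht, ht'⟩, Set.Ico_subset_Icc_self hy⟩
  have hQ0 : 0 ≤ Q (t0, θ0) := by
    by_contra hneg
    push Not at hneg
    have hne1 : t0 ≠ l := by
      rintro rfl
      simp only [hQ] at hneg
      ring_nf at hneg
      linarith
    have hne2 : t0 ≠ 2 * l - T := by
      rintro rfl
      have := hm θ0 hθ0
      simp only [hQ] at hneg
      have e1 : 2 * l - (2 * l - T) = T := by ring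
      have e2 : l - (2 * l - T) = δ := by rw [hδ]; ring
      rw [e1, e2, hεδ] at hneg
      linarith
    have hlt1 : t0 < l := lt_of_le_of_ne ht0' hne1
    have hlt2 : 2 * l - T < t0 := lt_of_le_of_ne ht0 (Ne.symm hne2)
    -- t direction
    have A1 : 0 ≤ wtt (2 * l - t0) θ0 - wtt t0 θ0 - 2 * ε := by
      apply second_deriv_nonneg (f := fun t => Q (t, θ0))
        (f' := fun t => -wt (2 * l - t) θ0 - wt t θ0 + ε * (1 + 2 * (l - t))) (x := t0)
      · filter_upwards [Ioo_mem_nhds hlt2 hlt1] with t ht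
        exact hmin' t θ0 ht.1.le ht.2.le
      · filter_upwards [Ioo_mem_nhds hlt2 hlt1] with t ht
        have a1 := (h1 (2 * l - t) (by linarith [ht.1]) θ0).comp t
          ((hasDerivAt_id t).const_sub (2 * l))
        have a2 := h1 t (by linarith [ht.2]) θ0
        have a3 : HasDerivAt (fun t => ε * ((l - t) + (l - t) ^ 2))
            (ε * (-1 + 2 * (l - t) ^ 1 * (-1))) t := by
          have := (hasDerivAt_id t).const_sub l
          exact (this.add (this.pow 2)).const_mul ε
        exact HasDerivAt.congr_deriv (f := fun t => Q (t, θ0)) ((a1.sub a2).sub a3) (by ring)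
      · have a1 := (h2 (2 * l - t0) (by linarith) θ0).comp t0
          ((hasDerivAt_id t0).const_sub (2 * l))
        have a2 := h2 t0 (by linarith) θ0
        have a3 : HasDerivAt (fun t => ε * (1 + 2 * (l - t))) (ε * (2 * (-1))) t0 := by
          have := (hasDerivAt_id t0).const_sub l
          exact ((this.const_mul 2).const_add 1).const_mul ε
        exact HasDerivAt.congr_deriv
          (f := fun t => -wt (2 * l - t) θ0 - wt t θ0 + ε * (1 + 2 * (l - t)))
          ((a1.neg.sub a2).add a3) (by ring)
    have A2 : 0 ≤ whh (2 * l - t0) θ0 - whh t0 θ0 := by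
      apply second_deriv_nonneg (f := fun θ => Q (t0, θ))
        (f' := fun θ => wh (2 * l - t0) θ - wh t0 θ) (x := θ0)
      · exact Eventually.of_forall fun θ => hmin' t0 θ ht0 ht0'
      · refine Eventually.of_forall fun θ => ?_
        have a1 := h3 (2 * l - t0) (by linarith) θ
        have a2 := h3 t0 (by linarith) θ
        exact (a1.sub a2).sub_const (ε * ((l - t0) + (l - t0) ^ 2))
      · exact (h4 (2 * l - t0) (by linarith) θ0).sub (h4 t0 (by linarith) θ0)
    have := hmon (2 * l - t0) t0 θ0 (by linarith) (by linarith) (hpos t0 θ0 ht0 ht0')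
    linarith
  intro t θ ht ht'
  have := hQ0.trans (hmin' t θ ht ht')
  simp only [hQ] at this
  have : 0 ≤ ε * (l - t) ^ 2 := by positivity
  linarith

/-- derivative from reflection inequality -/
lemma deriv_of_reflect {f : ℝ → ℝ} {f' l η ε : ℝ} (hf : HasDerivAt f f' l) (hη : 0 < η)
    (h : ∀ t, l - η ≤ t → t ≤ l → ε * (l - t) ≤ f (2 * l - t) - f t) : ε ≤ 2 * f' := by
  have hd : HasDerivAt (fun t => f (2 * l - t) - f t - ε * (l - t)) (-2 * f' + ε) l := by
    have e : 2 * l - l = l := by ring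
    have a0 : HasDerivAt f f' (2 * l - l) := by rw [e]; exact hf
    have a1 := a0.comp l ((hasDerivAt_id l).const_sub (2 * l))
    have a3 := ((hasDerivAt_id l).const_sub l).const_mul ε
    exact HasDerivAt.congr_deriv (f := fun t => f (2 * l - t) - f t - ε * (l - t))
      ((a1.sub hf).sub a3) (by ring)
  have : 0 ≤ 2 * f' - ε := by
    have hs := hd.hasDerivWithinAt (s := Set.Iio l)
    rw [hasDerivWithinAt_iff_tendsto_slope' (by simp)] at hs
    have : -2 * f' + ε ≤ 0 := by
      refine le_of_tendsto hs ?_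
      have : Set.Ico (l - η) l ∈ nhdsWithin l (Set.Iio l) := Ico_mem_nhdsLT (by linarith)
      filter_upwards [this] with t ht
      have hh := h t ht.1 ht.2.le
      rw [slope_def_field]
      have e : 2 * l - l = l := by ring
      rw [e]
      apply div_nonpos_of_nonneg_of_nonpos
      · linarith
      · linarith [ht.2]
    linarith
  linarith

lemma moving_plane {w wt wtt wh whh : ℝ → ℝ → ℝ} {T T1 lmax : ℝ} (hT : T < T1) (hl : lmax < T)
    (h1 : ∀ t < T1, ∀ θ, HasDerivAt (fun t => w t θ) (wt t θ) t)
    (h2 : ∀ t < T1, ∀ θ, HasDerivAt (fun t => wt t θ) (wtt t θ) t)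
    (h3 : ∀ t < T1, ∀ θ, HasDerivAt (fun θ => w t θ) (wh t θ) θ)
    (h4 : ∀ t < T1, ∀ θ, HasDerivAt (fun θ => wh t θ) (whh t θ) θ)
    (hc : ∀ p : ℝ × ℝ, p.1 < T1 → ContinuousAt (fun p : ℝ × ℝ => w p.1 p.2) p)
    (hct : ∀ p : ℝ × ℝ, p.1 < T1 → ContinuousAt (fun p : ℝ × ℝ => wt p.1 p.2) p)
    (hper : ∀ t θ, w t (θ + 2 * Real.pi) = w t θ)
    (hmon : ∀ s t θ, t ≤ s → s < T1 → w t θ ≤ w s θ →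
      wtt s θ + whh s θ ≤ wtt t θ + whh t θ)
    (hbd : ∀ l ≤ lmax, ∀ θ, w (2 * l - T) θ < w T θ)
    (hstart : ∃ l0, ∀ l ≤ l0, ∀ t θ, 2 * l - T ≤ t → t ≤ l → w t θ ≤ w (2 * l - t) θ) :
    ∀ t ≤ lmax, ∀ θ, 0 ≤ wt t θ := by
  have key : ∀ l ≤ lmax, ∀ t θ, 2 * l - T ≤ t → t ≤ l → w t θ ≤ w (2 * l - t) θ := by
    by_contra hcon
    push Not at hcon
    set B : Set ℝ := {l | l ≤ lmax ∧ ∃ t θ, 2 * l - T ≤ t ∧ t ≤ l ∧ w (2 * l - t) θ < w t θ} with hB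
    have hBne : B.Nonempty := by
      obtain ⟨l, h, t, θ, h'⟩ := hcon
      exact ⟨l, h, t, θ, h'⟩
    obtain ⟨l0, hl0⟩ := hstart
    have hBb : BddBelow B := by
      refine ⟨l0, ?_⟩
      rintro l ⟨_, t, θ, a, b, c⟩
      by_contra hlt
      push Not at hlt
      exact absurd (hl0 l hlt.le t θ a b) (not_le.2 c)
    set L := sInf B with hL
    have hLmax : L ≤ lmax := by
      obtain ⟨l, h⟩ := hBne
      exact (csInf_le hBb h).trans h.1
    have hgood : ∀ l < L, ∀ t θ, 2 * l - T ≤ t → t ≤ l → w t θ ≤ w (2 * l - t) θ := by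
      intro l hlL t θ ha hb
      by_contra hc'
      push Not at hc'
      exact absurd (csInf_le hBb (⟨by linarith, t, θ, ha, hb, hc'⟩ : l ∈ B)) (not_le.2 hlL)
    have hgoodL : ∀ t θ, 2 * L - T ≤ t → t ≤ L → w t θ ≤ w (2 * L - t) θ := by
      intro t θ ha hb
      rcases hb.eq_or_lt with hb | hb
      · have e : 2 * L - t = t := by rw [hb]; ring
        rw [e]
      · have hcont : ContinuousAt (fun l => w (2 * l - t) θ) L := by
          have := (h1 (2 * L - t) (by linarith) θ).continuousAt
          exact ContinuousAt.comp (f := fun l => 2 * l - t) this (by fun_prop)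
        have h5 : Tendsto (fun l => w (2 * l - t) θ) (nhdsWithin L (Set.Iio L))
          (nhds (w (2 * L - t) θ)) := hcont.tendsto.mono_left nhdsWithin_le_nhds
        refine ge_of_tendsto h5 ?_
        filter_upwards [Ioo_mem_nhdsLT hb] with l hl'
        exact hgood l hl'.2 t θ (by linarith [hl'.2]) hl'.1.le
    obtain ⟨ε, hε, hH⟩ := hopf_strip hT (by linarith) h1 h2 h3 h4 hc hper hmon (hbd L hLmax) hgoodL
    have hwt : ∀ θ, 0 < wt L θ := by
      intro θ
      have := deriv_of_reflect (η := T - L) (ε := ε) (h1 L (by linarith) θ) (by linarith)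
        (fun t ha hb => hH t θ (by linarith) hb)
      linarith
    -- sequence
    obtain ⟨l, -, hltend, hlB⟩ := exists_seq_tendsto_sInf hBne hBb
    have hseq : ∀ n, ∃ p : ℝ × ℝ, p ∈ Set.Icc (2 * L - T) lmax ×ˢ Set.Icc 0 (2 * Real.pi) ∧
        2 * l n - T ≤ p.1 ∧ p.1 ≤ l n ∧ w (2 * l n - p.1) p.2 < w p.1 p.2 := by
      intro n
      obtain ⟨hn, t, θ, a, b, c⟩ := hlB n
      have hLn : L ≤ l n := csInf_le hBb (hlB n)
      have hpp : Function.Periodic (fun θ => w (2 * l n - t) θ - w t θ) (2 * Real.pi) := by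
        intro θ; simp only [hper]
      obtain ⟨y, hy, hyy⟩ := hpp.exists_mem_Ico₀ (by positivity) θ
      refine ⟨(t, y), ⟨⟨by simp only; linarith, by simp only; linarith⟩,
        Set.Ico_subset_Icc_self hy⟩, a, b, ?_⟩
      simp only at hyy ⊢
      linarith
    choose p hpK hpa hpb hpc using hseq
    obtain ⟨q, hqK, φ, hφ, hpq⟩ := (isCompact_Icc.prod isCompact_Icc).tendsto_subseq hpK
    have hlφ : Tendsto (l ∘ φ) atTop (nhds L) := hltend.comp hφ.tendsto_atTop
    have hq1 : Tendsto (fun n => (p (φ n)).1) atTop (nhds q.1) :=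
      (continuous_fst.tendsto q).comp hpq
    have hq2 : Tendsto (fun n => (p (φ n)).2) atTop (nhds q.2) :=
      (continuous_snd.tendsto q).comp hpq
    have hqL : q.1 ≤ L := le_of_tendsto_of_tendsto' hq1 hlφ (fun n => hpb (φ n))
    have hqT : 2 * L - T ≤ q.1 := hqK.1.1
    have hs : Tendsto (fun n => 2 * l (φ n) - (p (φ n)).1) atTop (nhds (2 * L - q.1)) :=
      (hlφ.const_mul 2).sub hq1
    have hle : w (2 * L - q.1) q.2 ≤ w q.1 q.2 := by
      have b1 : Tendsto (fun n => w (2 * l (φ n) - (p (φ n)).1) (p (φ n)).2) atTop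
          (nhds (w (2 * L - q.1) q.2)) :=
        (hc (2 * L - q.1, q.2) (by simp only; linarith)).tendsto.comp (hs.prodMk_nhds hq2)
      have b2 : Tendsto (fun n => w (p (φ n)).1 (p (φ n)).2) atTop
          (nhds (w q.1 q.2)) :=
        (hc (q.1, q.2) (by simp only; linarith)).tendsto.comp (hq1.prodMk_nhds hq2)
      exact le_of_tendsto_of_tendsto' b1 b2 (fun n => (hpc (φ n)).le)
    have hqeq : q.1 = L := by
      by_contra hne
      have hlt : q.1 < L := lt_of_le_of_ne hqL hne
      have := hH q.1 q.2 hqT hqL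
      have : 0 < ε * (L - q.1) := mul_pos hε (by linarith)
      linarith
    -- mean value points
    have hmv : ∀ n, ∃ ξ, (p n).1 ≤ ξ ∧ ξ ≤ 2 * l n - (p n).1 ∧ wt ξ (p n).2 ≤ 0 := by
      intro n
      have hlt : (p n).1 < l n := by
        rcases (hpb n).eq_or_lt with h | h
        · exfalso
          have := hpc n
          rw [← h] at this
          have e : 2 * (p n).1 - (p n).1 = (p n).1 := by ring
          rw [e] at this
          exact lt_irrefl _ this
        · exact h
      have hTn : ∀ x ≤ 2 * l n - (p n).1, x < T1 := fun x hx => by linarith [hpa n]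
      obtain ⟨ξ, hξ, hξe⟩ := exists_hasDerivAt_eq_slope (fun t => w t (p n).2)
        (fun t => wt t (p n).2) (a := (p n).1) (b := 2 * l n - (p n).1) (by linarith)
        (fun x hx => (h1 x (hTn x hx.2) _).continuousAt.continuousWithinAt)
        (fun x hx => h1 x (hTn x hx.2.le) _)
      refine ⟨ξ, hξ.1.le, hξ.2.le, ?_⟩
      rw [hξe]
      apply div_nonpos_of_nonpos_of_nonneg
      · linarith [hpc n]
      · linarith
    choose ξ hξ1 hξ2 hξ3 using hmv
    have hξt : Tendsto (fun n => ξ (φ n)) atTop (nhds L) := by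
      refine tendsto_of_tendsto_of_tendsto_of_le_of_le (hqeq ▸ hq1)
        (h := fun n => 2 * l (φ n) - (p (φ n)).1) ?_ (fun n => hξ1 (φ n)) (fun n => hξ2 (φ n))
      have e : 2 * L - q.1 = L := by rw [hqeq]; ring
      rw [e] at hs
      exact hs
    have b3 : Tendsto (fun n => wt (ξ (φ n)) (p (φ n)).2) atTop (nhds (wt L q.2)) :=
      (hct (L, q.2) (by simp only; linarith)).tendsto.comp (hξt.prodMk_nhds hq2)
    have := le_of_tendsto' b3 (fun n => hξ3 (φ n))
    linarith [hwt q.2]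
  intro t ht θ
  have := deriv_of_reflect (η := T - t) (ε := 0) (h1 t (by linarith) θ) (by linarith)
    (fun s ha hb => by have := key t ht s θ (by linarith) hb; linarith)
  linarith

lemma leibniz_strip {f ft : ℝ → ℝ → ℝ} {T1 : ℝ}
    (h1 : ∀ t < T1, ∀ θ, HasDerivAt (fun t => f t θ) (ft t θ) t)
    (hc : ∀ p : ℝ × ℝ, p.1 < T1 → ContinuousAt (fun p : ℝ × ℝ => f p.1 p.2) p)
    (hct : ∀ p : ℝ × ℝ, p.1 < T1 → ContinuousAt (fun p : ℝ × ℝ => ft p.1 p.2) p)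
    {t : ℝ} (ht : t < T1) :
    HasDerivAt (fun t => ∫ θ in (0:ℝ)..(2 * Real.pi), f t θ)
      (∫ θ in (0:ℝ)..(2 * Real.pi), ft t θ) t := by
  have hslice : ∀ g : ℝ → ℝ → ℝ,
      (∀ p : ℝ × ℝ, p.1 < T1 → ContinuousAt (fun p : ℝ × ℝ => g p.1 p.2) p) →
      ∀ s < T1, Continuous (g s) := by
    intro g hg s hs
    rw [continuous_iff_continuousAt]
    intro θ
    exact ContinuousAt.comp (x := θ) (f := fun θ : ℝ => (s, θ))
      (g := fun p : ℝ × ℝ => g p.1 p.2) (hg (s, θ) hs) (by fun_prop)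
  obtain ⟨r, hr⟩ : ∃ r, r = (T1 - t) / 2 := ⟨_, rfl⟩
  have hr0 : 0 < r := by rw [hr]; linarith
  have hK : IsCompact (Set.Icc (t - r) (t + r) ×ˢ Set.Icc 0 (2 * Real.pi)) :=
    isCompact_Icc.prod isCompact_Icc
  have hcK : ContinuousOn (fun p : ℝ × ℝ => ft p.1 p.2)
      (Set.Icc (t - r) (t + r) ×ˢ Set.Icc 0 (2 * Real.pi)) := by
    rintro ⟨s, θ⟩ ⟨⟨-, hs⟩, -⟩
    simp only at hs
    exact (hct (s, θ) (by simp only; linarith)).continuousWithinAt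
  obtain ⟨C, hC⟩ := hK.exists_bound_of_continuousOn hcK
  have hnb : Set.Ioo (t - r) (t + r) ∈ nhds t := Ioo_mem_nhds (by linarith) (by linarith)
  refine (intervalIntegral.hasDerivAt_integral_of_dominated_loc_of_deriv_le
    (F := f) (F' := ft) (bound := fun _ => C) hnb ?_ ?_ ?_ ?_ ?_ ?_).2
  · filter_upwards [hnb] with s hs
    exact (hslice f hc s (by linarith [hs.2])).aestronglyMeasurable
  · exact (hslice f hc t ht).intervalIntegrable _ _
  · exact (hslice ft hct t ht).aestronglyMeasurable
  · refine Eventually.of_forall fun θ hθ s hs => ?_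
    rw [Set.uIoc_of_le (by positivity)] at hθ
    exact hC (s, θ) ⟨⟨hs.1.le, hs.2.le⟩, ⟨hθ.1.le, hθ.2⟩⟩
  · exact intervalIntegrable_const
  · refine Eventually.of_forall fun θ hθ s hs => ?_
    exact h1 s (by linarith [hs.2]) θ

lemma mono_helper {h h' : ℝ → ℝ} {s t : ℝ} (hst : s ≤ t)
    (hd : ∀ x, s ≤ x → x ≤ t → HasDerivAt h (h' x) x) (hn : ∀ x, s ≤ x → x ≤ t → 0 ≤ h' x) :
    h s ≤ h t := by
  have : MonotoneOn h (Set.Icc s t) := by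
    apply monotoneOn_of_deriv_nonneg (convex_Icc s t)
    · exact fun x hx => (hd x hx.1 hx.2).continuousAt.continuousWithinAt
    · intro x hx
      rw [interior_Icc] at hx
      exact (hd x hx.1.le hx.2.le).differentiableAt.differentiableWithinAt
    · intro x hx
      rw [interior_Icc] at hx
      rw [(hd x hx.1.le hx.2.le).deriv]
      exact hn x hx.1.le hx.2.le
  exact this ⟨le_rfl, hst⟩ ⟨hst, le_rfl⟩ hst

lemma avg_contra {W Wt Wtt Wh Whh F : ℝ → ℝ → ℝ} {T1 M C a b : ℝ} (ha : 0 < a) (hb : 0 < b)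
    (h1 : ∀ t < T1, ∀ θ, HasDerivAt (fun t => W t θ) (Wt t θ) t)
    (h2 : ∀ t < T1, ∀ θ, HasDerivAt (fun t => Wt t θ) (Wtt t θ) t)
    (h4 : ∀ t < T1, ∀ θ, HasDerivAt (fun θ => Wh t θ) (Whh t θ) θ)
    (hc : ∀ p : ℝ × ℝ, p.1 < T1 → ContinuousAt (fun p : ℝ × ℝ => W p.1 p.2) p)
    (hct : ∀ p : ℝ × ℝ, p.1 < T1 → ContinuousAt (fun p : ℝ × ℝ => Wt p.1 p.2) p)
    (hctt : ∀ p : ℝ × ℝ, p.1 < T1 → ContinuousAt (fun p : ℝ × ℝ => Wtt p.1 p.2) p)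
    (hchh : ∀ p : ℝ × ℝ, p.1 < T1 → ContinuousAt (fun p : ℝ × ℝ => Whh p.1 p.2) p)
    (hper : ∀ t θ, Wh t (θ + 2 * Real.pi) = Wh t θ)
    (hF : ∀ t < T1, ∀ θ, Wtt t θ + Whh t θ = - F t θ)
    (hFa : ∀ t < T1, ∀ θ, a * Real.exp (W t θ) ≤ F t θ)
    (hFb : ∀ t ≤ -M / 2, ∀ θ, F t θ ≤ 4 * b * Real.exp (M + 2 * t))
    (hlim : ∃ D t', ∀ t ≤ t', ∀ θ, |Wt t θ - 2| ≤ D * Real.exp t ∧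
      |W t θ - 2 * t - M| ≤ D * Real.exp t)
    (hC : 2 * Real.exp b / a < C) (hl : -M / 2 + C < T1)
    (hpos : ∀ t ≤ -M / 2 + C, ∀ θ, 0 ≤ Wt t θ) : False := by
  have hpi := Real.pi_pos
  have hC0 : 0 < C := lt_trans (by positivity) hC
  have hslice : ∀ g : ℝ → ℝ → ℝ,
      (∀ p : ℝ × ℝ, p.1 < T1 → ContinuousAt (fun p : ℝ × ℝ => g p.1 p.2) p) →
      ∀ s < T1, Continuous (g s) := by
    intro g hg s hs
    rw [continuous_iff_continuousAt]
    intro θ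
    exact ContinuousAt.comp (x := θ) (f := fun θ : ℝ => (s, θ))
      (g := fun p : ℝ × ℝ => g p.1 p.2) (hg (s, θ) hs) (by fun_prop)
  obtain ⟨I, hI⟩ : ∃ I : ℝ → ℝ, I = fun t => ∫ θ in (0:ℝ)..(2 * Real.pi), W t θ := ⟨_, rfl⟩
  obtain ⟨I1, hI1⟩ : ∃ I : ℝ → ℝ, I = fun t => ∫ θ in (0:ℝ)..(2 * Real.pi), Wt t θ := ⟨_, rfl⟩
  obtain ⟨I2, hI2⟩ : ∃ I : ℝ → ℝ, I = fun t => ∫ θ in (0:ℝ)..(2 * Real.pi), Wtt t θ := ⟨_, rfl⟩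
  have d1 : ∀ t < T1, HasDerivAt I (I1 t) t := by
    intro t ht; rw [hI, hI1]; exact leibniz_strip h1 hc hct ht
  have d2 : ∀ t < T1, HasDerivAt I1 (I2 t) t := by
    intro t ht; rw [hI1, hI2]; exact leibniz_strip h2 hct hctt ht
  have hFc : ∀ t < T1, Continuous (F t) := by
    intro t ht
    have : F t = fun θ => -(Wtt t θ + Whh t θ) := by
      funext θ; rw [hF t ht]; ring
    rw [this]
    exact ((hslice Wtt hctt t ht).add (hslice Whh hchh t ht)).neg
  have hI2F : ∀ t < T1, I2 t = - ∫ θ in (0:ℝ)..(2 * Real.pi), F t θ := by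
    intro t ht
    have z : ∫ θ in (0:ℝ)..(2 * Real.pi), Whh t θ = 0 := by
      rw [intervalIntegral.integral_eq_sub_of_hasDerivAt (fun θ _ => h4 t ht θ)
        ((hslice Whh hchh t ht).intervalIntegrable _ _)]
      have := hper t 0
      rw [zero_add] at this
      rw [this, sub_self]
    have : I2 t + ∫ θ in (0:ℝ)..(2 * Real.pi), Whh t θ
        = - ∫ θ in (0:ℝ)..(2 * Real.pi), F t θ := by
      rw [hI2, ← intervalIntegral.integral_add ((hslice Wtt hctt t ht).intervalIntegrable _ _)
        ((hslice Whh hchh t ht).intervalIntegrable _ _), ← intervalIntegral.integral_neg]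
      exact intervalIntegral.integral_congr (fun θ _ => hF t ht θ)
    linarith
  have h2pi : (0:ℝ) ≤ 2 * Real.pi := by positivity
  have hI2le : ∀ t < T1, I2 t ≤ 0 := by
    intro t ht
    rw [hI2F t ht]
    have : 0 ≤ ∫ θ in (0:ℝ)..(2 * Real.pi), F t θ :=
      intervalIntegral.integral_nonneg h2pi
        (fun θ _ => le_trans (by positivity) (hFa t ht θ))
    linarith
  have hI2ge : ∀ t ≤ -M / 2, -(8 * Real.pi * b * Real.exp (M + 2 * t)) ≤ I2 t := by
    intro t ht
    have ht1 : t < T1 := by linarith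
    rw [hI2F t ht1]
    have : ∫ θ in (0:ℝ)..(2 * Real.pi), F t θ ≤
        ∫ θ in (0:ℝ)..(2 * Real.pi), 4 * b * Real.exp (M + 2 * t) :=
      intervalIntegral.integral_mono_on h2pi ((hFc t ht1).intervalIntegrable _ _)
        intervalIntegrable_const (fun θ _ => hFb t ht θ)
    rw [intervalIntegral.integral_const] at this
    simp only [sub_zero, smul_eq_mul] at this
    linarith
  -- limits
  obtain ⟨D, t', hD⟩ := hlim
  have hexp : Tendsto (fun t : ℝ => 2 * Real.pi * (D * Real.exp t)) atBot (nhds 0) := by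
    have := (Real.tendsto_exp_atBot.const_mul D).const_mul (2 * Real.pi)
    simpa using this
  have hex2 : ∀ k : ℝ, Tendsto (fun t : ℝ => k * Real.exp (M + 2 * t)) atBot (nhds 0) := by
    intro k
    have h6 : Tendsto (fun t : ℝ => M + 2 * t) atBot atBot :=
      tendsto_atBot_add_const_left _ _ (tendsto_id.const_mul_atBot (by norm_num))
    have := (Real.tendsto_exp_atBot.comp h6).const_mul k
    simpa using this
  have hlimI1 : Tendsto I1 atBot (nhds (4 * Real.pi)) := by
    rw [tendsto_iff_norm_sub_tendsto_zero]
    refine squeeze_zero' (Eventually.of_forall fun t => norm_nonneg _) ?_ hexp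
    filter_upwards [eventually_le_atBot t', eventually_lt_atBot T1] with t h5 h6
    have e : I1 t - 4 * Real.pi = ∫ θ in (0:ℝ)..(2 * Real.pi), (Wt t θ - 2) := by
      rw [intervalIntegral.integral_sub ((hslice Wt hct t h6).intervalIntegrable _ _)
        intervalIntegrable_const, intervalIntegral.integral_const, hI1]
      simp only [sub_zero, smul_eq_mul]
      ring
    rw [e]
    have := intervalIntegral.norm_integral_le_of_norm_le_const
      (a := (0:ℝ)) (b := 2 * Real.pi) (f := fun θ => Wt t θ - 2) (C := D * Real.exp t)
      (fun θ _ => (hD t h5 θ).1)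
    rw [sub_zero, abs_of_nonneg h2pi] at this
    linarith
  have hlimI : Tendsto (fun t => I t - 4 * Real.pi * t) atBot (nhds (2 * Real.pi * M)) := by
    rw [tendsto_iff_norm_sub_tendsto_zero]
    refine squeeze_zero' (Eventually.of_forall fun t => norm_nonneg _) ?_ hexp
    filter_upwards [eventually_le_atBot t', eventually_lt_atBot T1] with t h5 h6
    have e : I t - 4 * Real.pi * t - 2 * Real.pi * M
        = ∫ θ in (0:ℝ)..(2 * Real.pi), (W t θ - (2 * t + M)) := by
      rw [intervalIntegral.integral_sub ((hslice W hc t h6).intervalIntegrable _ _)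
        intervalIntegrable_const, intervalIntegral.integral_const, hI]
      simp only [sub_zero, smul_eq_mul]
      ring
    rw [e]
    have := intervalIntegral.norm_integral_le_of_norm_le_const
      (a := (0:ℝ)) (b := 2 * Real.pi) (f := fun θ => W t θ - (2 * t + M)) (C := D * Real.exp t)
      (fun θ _ => by rw [← sub_sub]; exact (hD t h5 θ).2)
    rw [sub_zero, abs_of_nonneg h2pi] at this
    linarith
  have dexp : ∀ k t : ℝ, HasDerivAt (fun t => k * Real.exp (M + 2 * t))
      (2 * k * Real.exp (M + 2 * t)) t := by
    intro k t
    have h7 : HasDerivAt (fun t : ℝ => M + 2 * t) (2 * 1) t :=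
      ((hasDerivAt_id t).const_mul 2).const_add M
    exact (h7.exp.const_mul k).congr_deriv (by ring)
  have hI1le : I1 (-M / 2) ≤ 4 * Real.pi := by
    refine ge_of_tendsto hlimI1 ?_
    filter_upwards [eventually_le_atBot (-M / 2)] with s hs
    have := mono_helper (h := fun t => - I1 t) (h' := fun t => - I2 t) hs
      (fun x _ hx => (d2 x (by linarith)).neg)
      (fun x _ hx => by linarith [hI2le x (by linarith)])
    linarith
  have hI1ge : ∀ t ≤ -M / 2, 4 * Real.pi ≤ I1 t + 4 * Real.pi * b * Real.exp (M + 2 * t) := by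
    intro t ht
    have hl' := hlimI1.add (hex2 (4 * Real.pi * b))
    rw [add_zero] at hl'
    refine le_of_tendsto hl' ?_
    filter_upwards [eventually_le_atBot t] with s hs
    exact mono_helper (h := fun t => I1 t + 4 * Real.pi * b * Real.exp (M + 2 * t))
      (h' := fun t => I2 t + 2 * (4 * Real.pi * b) * Real.exp (M + 2 * t)) hs
      (fun x _ hx => (d2 x (by linarith)).add (dexp _ x))
      (fun x _ hx => by linarith [hI2ge x (by linarith)])
  have hI0 : -(2 * Real.pi * b) ≤ I (-M / 2) := by
    have hl' := hlimI.add (hex2 (2 * Real.pi * b))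
    rw [add_zero] at hl'
    have : 2 * Real.pi * M ≤ I (-M / 2) - 4 * Real.pi * (-M / 2) +
        2 * Real.pi * b * Real.exp (M + 2 * (-M / 2)) := by
      refine le_of_tendsto hl' ?_
      filter_upwards [eventually_le_atBot (-M / 2)] with s hs
      exact mono_helper (h := fun t => I t - 4 * Real.pi * t
          + 2 * Real.pi * b * Real.exp (M + 2 * t))
        (h' := fun t => I1 t - 4 * Real.pi * 1
          + 2 * (2 * Real.pi * b) * Real.exp (M + 2 * t)) hs
        (fun x _ hx => ((d1 x (by linarith)).sub ((hasDerivAt_id x).const_mul _)).add (dexp _ x))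
        (fun x _ hx => by linarith [hI1ge x (by linarith)])
    have e : M + 2 * (-M / 2) = 0 := by ring
    rw [e, Real.exp_zero] at this
    linarith
  have hI1nn : ∀ t ≤ -M / 2 + C, 0 ≤ I1 t := by
    intro t ht
    rw [hI1]
    exact intervalIntegral.integral_nonneg h2pi (fun θ _ => hpos t ht θ)
  have hIge : ∀ t, -M / 2 ≤ t → t ≤ -M / 2 + C → -(2 * Real.pi * b) ≤ I t := by
    intro t ht ht'
    exact hI0.trans (mono_helper ht (fun x _ hx => d1 x (by linarith))
      (fun x _ hx => hI1nn x (by linarith)))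
  have hI2up : ∀ t, -M / 2 ≤ t → t ≤ -M / 2 + C →
      I2 t ≤ -(2 * Real.pi * a * Real.exp (-b)) := by
    intro t ht ht'
    have ht1 : t < T1 := by linarith
    rw [hI2F t ht1]
    have hWc := hslice W hc t ht1
    have : ∫ θ in (0:ℝ)..(2 * Real.pi), (a * Real.exp (-b)) * (W t θ + (1 + b)) ≤
        ∫ θ in (0:ℝ)..(2 * Real.pi), F t θ := by
      refine intervalIntegral.integral_mono_on h2pi
        (Continuous.intervalIntegrable (by fun_prop) _ _) ((hFc t ht1).intervalIntegrable _ _) ?_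
      intro θ _
      refine le_trans ?_ (hFa t ht1 θ)
      have e1 : Real.exp (W t θ) = Real.exp (-b) * Real.exp (W t θ + b) := by
        rw [← Real.exp_add]; congr 1; ring
      have e2 := Real.add_one_le_exp (W t θ + b)
      rw [e1, mul_assoc]
      have : Real.exp (-b) * (W t θ + (1 + b)) ≤ Real.exp (-b) * Real.exp (W t θ + b) :=
        mul_le_mul_of_nonneg_left (by linarith) (Real.exp_pos _).le
      exact mul_le_mul_of_nonneg_left this ha.le
    rw [intervalIntegral.integral_const_mul, intervalIntegral.integral_add
      (hWc.intervalIntegrable _ _) intervalIntegrable_const, intervalIntegral.integral_const] at this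
    simp only [sub_zero, smul_eq_mul] at this
    have h8 := hIge t ht ht'
    rw [hI] at h8
    simp only at h8
    have h9 : a * Real.exp (-b) * (2 * Real.pi) ≤ a * Real.exp (-b) *
        ((∫ θ in (0:ℝ)..(2 * Real.pi), W t θ) + 2 * Real.pi * (1 + b)) :=
      mul_le_mul_of_nonneg_left (by linarith) (by positivity)
    linarith
  have hfin := mono_helper (s := -M / 2) (t := -M / 2 + C)
    (h := fun t => - I1 t - 2 * Real.pi * a * Real.exp (-b) * t)
    (h' := fun t => - I2 t - 2 * Real.pi * a * Real.exp (-b) * 1) (by linarith)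
    (fun x _ hx => (d2 x (by linarith)).neg.sub ((hasDerivAt_id x).const_mul _))
    (fun x hx hx' => by linarith [hI2up x hx hx'])
  have h10 := hI1nn (-M / 2 + C) le_rfl
  have h11 : 2 * Real.pi * (a * Real.exp (-b) * C) ≤ 4 * Real.pi := by linarith
  have h12 : 2 < a * Real.exp (-b) * C := by
    rw [div_lt_iff₀ ha] at hC
    have e : Real.exp b * Real.exp (-b) = 1 := by rw [← Real.exp_add]; simp
    have := mul_lt_mul_of_pos_right hC (Real.exp_pos (-b))
    nlinarith
  nlinarith
noncomputable def polG (t θ : ℝ) : E2 :=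
  Real.exp t • (Real.cos θ • EuclideanSpace.single (0 : Fin 2) (1 : ℝ)
    + Real.sin θ • EuclideanSpace.single (1 : Fin 2) (1 : ℝ))

noncomputable def polJ (t θ : ℝ) : E2 :=
  Real.exp t • ((-Real.sin θ) • EuclideanSpace.single (0 : Fin 2) (1 : ℝ)
    + Real.cos θ • EuclideanSpace.single (1 : Fin 2) (1 : ℝ))

lemma norm_dir (θ : ℝ) : ‖(Real.cos θ • EuclideanSpace.single (0 : Fin 2) (1 : ℝ)
    + Real.sin θ • EuclideanSpace.single (1 : Fin 2) (1 : ℝ) : E2)‖ = 1 := by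
  rw [EuclideanSpace.norm_eq]
  simp [Fin.sum_univ_two]

lemma norm_polG (t θ : ℝ) : ‖polG t θ‖ = Real.exp t := by
  rw [polG, norm_smul, norm_dir, mul_one, Real.norm_eq_abs, Real.abs_exp]

lemma norm_polG_sub (s t θ : ℝ) : ‖polG s θ - polG t θ‖ = |Real.exp s - Real.exp t| := by
  rw [polG, polG, ← sub_smul, norm_smul, norm_dir, mul_one, Real.norm_eq_abs]

lemma polG_dt (t θ : ℝ) : HasDerivAt (fun t => polG t θ) (polG t θ) t := by
  unfold polG
  exact (Real.hasDerivAt_exp t).smul_const _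

lemma polG_dh (t θ : ℝ) : HasDerivAt (fun θ => polG t θ) (polJ t θ) θ := by
  unfold polG polJ
  exact (((Real.hasDerivAt_cos θ).smul_const _).add
    ((Real.hasDerivAt_sin θ).smul_const _)).const_smul (Real.exp t)

lemma polJ_dh (t θ : ℝ) : HasDerivAt (fun θ => polJ t θ) (-polG t θ) θ := by
  unfold polG polJ
  have := (((Real.hasDerivAt_sin θ).neg.smul_const
    (EuclideanSpace.single (0 : Fin 2) (1 : ℝ) : E2)).add
    ((Real.hasDerivAt_cos θ).smul_const
    (EuclideanSpace.single (1 : Fin 2) (1 : ℝ) : E2))).const_smul (Real.exp t)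
  refine HasDerivAt.congr_deriv this ?_
  module

lemma polG_cont : Continuous (fun p : ℝ × ℝ => polG p.1 p.2) := by
  unfold polG; fun_prop

lemma polJ_cont : Continuous (fun p : ℝ × ℝ => polJ p.1 p.2) := by
  unfold polJ; fun_prop

lemma polG_per (t θ : ℝ) : polG t (θ + 2 * Real.pi) = polG t θ := by
  simp [polG]

lemma polJ_per (t θ : ℝ) : polJ t (θ + 2 * Real.pi) = polJ t θ := by
  simp [polJ]

lemma lapl_eq {u : E2 → ℝ} {x : E2} (hu : ContDiffAt ℝ 2 u x) :
    lapl u x = fderiv ℝ (fderiv ℝ u) x (EuclideanSpace.single 0 1) (EuclideanSpace.single 0 1)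
      + fderiv ℝ (fderiv ℝ u) x (EuclideanSpace.single 1 1) (EuclideanSpace.single 1 1) := by
  have hd : DifferentiableAt ℝ (fderiv ℝ u) x :=
    (hu.fderiv_right (m := 1) (by norm_num)).differentiableAt (by norm_num)
  have : ∀ j : Fin 2, pd j (pd j u) x = fderiv ℝ (fderiv ℝ u) x (EuclideanSpace.single j 1)
      (EuclideanSpace.single j 1) := by
    intro j
    have h := hd.hasFDerivAt.clm_apply
      (hasFDerivAt_const (EuclideanSpace.single j (1:ℝ) : E2) x)
    have e : pd j u = fun y => fderiv ℝ u y (EuclideanSpace.single j 1) := rfl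
    unfold pd at e ⊢
    rw [h.fderiv]
    simp
  rw [lapl, this, this]

lemma bil_polar (B : E2 →L[ℝ] E2 →L[ℝ] ℝ) (t θ : ℝ) :
    B (polG t θ) (polG t θ) + B (polJ t θ) (polJ t θ) = Real.exp (2 * t) *
      (B (EuclideanSpace.single 0 1) (EuclideanSpace.single 0 1)
      + B (EuclideanSpace.single 1 1) (EuclideanSpace.single 1 1)) := by
  have e : Real.exp (2 * t) = Real.exp t * Real.exp t := by rw [← Real.exp_add]; congr 1; ring
  have h := Real.sin_sq_add_cos_sq θ
  rw [e]
  simp only [polG, polJ, map_add, map_smul, add_apply, smul_apply,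
    smul_eq_mul]
  have h' : Real.sin θ ^ 2 = 1 - Real.cos θ ^ 2 := by linarith
  ring_nf
  rw [h']
  ring

lemma core {u V : E2 → ℝ} {y0 : E2} {R a b A m M r0 C : ℝ} (hR : 0 < R) (ha : 0 < a) (hab : a ≤ b)
    (hA : 0 < A)
    (hV : ∀ x ∈ ball y0 (2 * R), a ≤ V x ∧ V x ≤ b)
    (hVL : ∀ x ∈ ball y0 (2 * R), ∀ y ∈ ball y0 (2 * R), |V x - V y| ≤ A * ‖x - y‖)
    (hu : ∀ x ∈ ball y0 (2 * R), ContDiffAt ℝ 2 u x)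
    (heq : ∀ x ∈ ball y0 (2 * R), -(lapl u x) = V x * Real.exp (u x))
    (hM : u y0 = M) (hm : ∀ x ∈ ball y0 (2 * R), m ≤ u x)
    (hr0 : ∀ x, ‖x - y0‖ ≤ r0 → u x ≤ M + Real.log 4)
    (hC : 2 * Real.exp b / a < C) (hc1 : Real.exp (-M / 2) ≤ r0)
    (hc2 : -M / 2 + C < Real.log R) (hc3 : Real.exp (-M + 2 * C - Real.log R) ≤ r0)
    (hc4 : 4 * C + Real.log 4 - 4 * Real.log R + A / a * R < m + M) : False := by
  have hb : 0 < b := by linarith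
  obtain ⟨T, hT⟩ : ∃ T, T = Real.log R := ⟨_, rfl⟩
  obtain ⟨T1, hT1⟩ : ∃ T1, T1 = Real.log (2 * R) := ⟨_, rfl⟩
  have hTT : T < T1 := by rw [hT, hT1]; exact Real.log_lt_log hR (by linarith)
  have eT : Real.exp T = R := by rw [hT, Real.exp_log hR]
  have eT1 : Real.exp T1 = 2 * R := by rw [hT1, Real.exp_log (by linarith)]
  rw [← hT] at hc2 hc3 hc4
  have hmem : ∀ t < T1, ∀ θ, y0 + polG t θ ∈ ball y0 (2 * R) := by
    intro t ht θ
    rw [mem_ball, dist_eq_norm, add_sub_cancel_left, norm_polG, ← eT1]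
    exact Real.exp_lt_exp.2 ht
  have hdu : ∀ x ∈ ball y0 (2 * R), HasFDerivAt u (fderiv ℝ u x) x := fun x hx =>
    ((hu x hx).differentiableAt (by norm_num)).hasFDerivAt
  have hdc : ∀ x ∈ ball y0 (2 * R), ContDiffAt ℝ 1 (fderiv ℝ u) x := fun x hx =>
    (hu x hx).fderiv_right (m := 1) (by norm_num)
  have hddu : ∀ x ∈ ball y0 (2 * R),
      HasFDerivAt (fderiv ℝ u) (fderiv ℝ (fderiv ℝ u) x) x := fun x hx =>
    ((hdc x hx).differentiableAt (by norm_num)).hasFDerivAt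
  have hddc : ∀ x ∈ ball y0 (2 * R), ContinuousAt (fderiv ℝ (fderiv ℝ u)) x := fun x hx =>
    ((hdc x hx).fderiv_right (m := 0) (by norm_num)).continuousAt
  obtain ⟨W, hW⟩ : ∃ W : ℝ → ℝ → ℝ, W = fun t θ => u (y0 + polG t θ) + 2 * t := ⟨_, rfl⟩
  obtain ⟨Wt, hWt⟩ : ∃ W : ℝ → ℝ → ℝ, W = fun t θ =>
    fderiv ℝ u (y0 + polG t θ) (polG t θ) + 2 := ⟨_, rfl⟩
  obtain ⟨Wtt, hWtt⟩ : ∃ W : ℝ → ℝ → ℝ, W = fun t θ =>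
    fderiv ℝ (fderiv ℝ u) (y0 + polG t θ) (polG t θ) (polG t θ)
      + fderiv ℝ u (y0 + polG t θ) (polG t θ) := ⟨_, rfl⟩
  obtain ⟨Wh, hWh⟩ : ∃ W : ℝ → ℝ → ℝ, W = fun t θ =>
    fderiv ℝ u (y0 + polG t θ) (polJ t θ) := ⟨_, rfl⟩
  obtain ⟨Whh, hWhh⟩ : ∃ W : ℝ → ℝ → ℝ, W = fun t θ =>
    fderiv ℝ (fderiv ℝ u) (y0 + polG t θ) (polJ t θ) (polJ t θ)
      + fderiv ℝ u (y0 + polG t θ) (-polG t θ) := ⟨_, rfl⟩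
  obtain ⟨F, hFdef⟩ : ∃ F : ℝ → ℝ → ℝ, F = fun t θ =>
    V (y0 + polG t θ) * Real.exp (W t θ) := ⟨_, rfl⟩
  have h1 : ∀ t < T1, ∀ θ, HasDerivAt (fun t => W t θ) (Wt t θ) t := by
    intro t ht θ
    rw [hW, hWt]
    have a1 := (hdu _ (hmem t ht θ)).comp_hasDerivAt t ((polG_dt t θ).const_add y0)
    have a2 := (hasDerivAt_id t).const_mul (2:ℝ)
    rw [mul_one] at a2
    exact a1.add a2
  have h2 : ∀ t < T1, ∀ θ, HasDerivAt (fun t => Wt t θ) (Wtt t θ) t := by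
    intro t ht θ
    rw [hWt, hWtt]
    have a1 := (hddu _ (hmem t ht θ)).comp_hasDerivAt t ((polG_dt t θ).const_add y0)
    exact (a1.clm_apply (polG_dt t θ)).add_const 2
  have h3 : ∀ t < T1, ∀ θ, HasDerivAt (fun θ => W t θ) (Wh t θ) θ := by
    intro t ht θ
    rw [hW, hWh]
    have a1 := (hdu _ (hmem t ht θ)).comp_hasDerivAt θ ((polG_dh t θ).const_add y0)
    exact a1.add_const (2 * t)
  have h4 : ∀ t < T1, ∀ θ, HasDerivAt (fun θ => Wh t θ) (Whh t θ) θ := by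
    intro t ht θ
    rw [hWh, hWhh]
    have a1 := (hddu _ (hmem t ht θ)).comp_hasDerivAt θ ((polG_dh t θ).const_add y0)
    exact a1.clm_apply (polJ_dh t θ)
  have cG : Continuous (fun p : ℝ × ℝ => y0 + polG p.1 p.2) := continuous_const.add polG_cont
  have cu : ∀ p : ℝ × ℝ, p.1 < T1 →
      ContinuousAt (fun p : ℝ × ℝ => u (y0 + polG p.1 p.2)) p := fun p hp =>
    ContinuousAt.comp (g := u) (hdu _ (hmem p.1 hp p.2)).continuousAt cG.continuousAt
  have cdu : ∀ p : ℝ × ℝ, p.1 < T1 →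
      ContinuousAt (fun p : ℝ × ℝ => fderiv ℝ u (y0 + polG p.1 p.2)) p := fun p hp =>
    ContinuousAt.comp (g := fderiv ℝ u) (hddu _ (hmem p.1 hp p.2)).continuousAt cG.continuousAt
  have cddu : ∀ p : ℝ × ℝ, p.1 < T1 →
      ContinuousAt (fun p : ℝ × ℝ => fderiv ℝ (fderiv ℝ u) (y0 + polG p.1 p.2)) p := fun p hp =>
    ContinuousAt.comp (g := fderiv ℝ (fderiv ℝ u)) (hddc _ (hmem p.1 hp p.2)) cG.continuousAt
  have hc : ∀ p : ℝ × ℝ, p.1 < T1 → ContinuousAt (fun p : ℝ × ℝ => W p.1 p.2) p := by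
    intro p hp; rw [hW]
    exact (cu p hp).add (by fun_prop)
  have hct : ∀ p : ℝ × ℝ, p.1 < T1 → ContinuousAt (fun p : ℝ × ℝ => Wt p.1 p.2) p := by
    intro p hp; rw [hWt]
    exact ((cdu p hp).clm_apply polG_cont.continuousAt).add continuousAt_const
  have hctt : ∀ p : ℝ × ℝ, p.1 < T1 → ContinuousAt (fun p : ℝ × ℝ => Wtt p.1 p.2) p := by
    intro p hp; rw [hWtt]
    exact (((cddu p hp).clm_apply polG_cont.continuousAt).clm_apply polG_cont.continuousAt).add
      ((cdu p hp).clm_apply polG_cont.continuousAt)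
  have hchh : ∀ p : ℝ × ℝ, p.1 < T1 → ContinuousAt (fun p : ℝ × ℝ => Whh p.1 p.2) p := by
    intro p hp; rw [hWhh]
    exact (((cddu p hp).clm_apply polJ_cont.continuousAt).clm_apply polJ_cont.continuousAt).add
      ((cdu p hp).clm_apply polG_cont.continuousAt.neg)
  have hWper : ∀ t θ, W t (θ + 2 * Real.pi) = W t θ := by
    intro t θ; simp only [hW, polG_per]
  have hWhper : ∀ t θ, Wh t (θ + 2 * Real.pi) = Wh t θ := by
    intro t θ; simp only [hWh, polG_per, polJ_per]
  have hF : ∀ t < T1, ∀ θ, Wtt t θ + Whh t θ = - F t θ := by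
    intro t ht θ
    have e1 := bil_polar (fderiv ℝ (fderiv ℝ u) (y0 + polG t θ)) t θ
    rw [← lapl_eq (hu _ (hmem t ht θ))] at e1
    have e2 := heq _ (hmem t ht θ)
    simp only [hWtt, hWhh, hFdef, hW, map_neg, Real.exp_add]
    have e3 : lapl u (y0 + polG t θ) = - (V (y0 + polG t θ) * Real.exp (u (y0 + polG t θ))) := by
      linarith
    rw [e3] at e1
    linarith
  have hFa : ∀ t < T1, ∀ θ, a * Real.exp (W t θ) ≤ F t θ := by
    intro t ht θ
    rw [hFdef]
    exact mul_le_mul_of_nonneg_right (hV _ (hmem t ht θ)).1 (Real.exp_pos _).le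
  have hWup : ∀ t, Real.exp t ≤ r0 → ∀ θ, W t θ ≤ M + Real.log 4 + 2 * t := by
    intro t ht θ
    have := hr0 (y0 + polG t θ) (by rw [add_sub_cancel_left, norm_polG]; exact ht)
    rw [hW]
    linarith
  have hC0 : 0 < C := lt_trans (by positivity) hC
  have hFb : ∀ t ≤ -M / 2, ∀ θ, F t θ ≤ 4 * b * Real.exp (M + 2 * t) := by
    intro t ht θ
    have ht1 : t < T1 := by linarith
    have h5 := hWup t ((Real.exp_le_exp.2 ht).trans hc1) θ
    have h6 : Real.exp (W t θ) ≤ 4 * Real.exp (M + 2 * t) := by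
      refine (Real.exp_le_exp.2 h5).trans (le_of_eq ?_)
      rw [show M + Real.log 4 + 2 * t = Real.log 4 + (M + 2 * t) by ring, Real.exp_add,
        Real.exp_log (by norm_num)]
    rw [hFdef]
    calc V (y0 + polG t θ) * Real.exp (W t θ) ≤ b * (4 * Real.exp (M + 2 * t)) :=
          mul_le_mul (hV _ (hmem t ht1 θ)).2 h6 (Real.exp_pos _).le hb.le
      _ = _ := by ring
  -- bounds on the closed ball
  have hsub : closedBall y0 R ⊆ ball y0 (2 * R) := closedBall_subset_ball (by linarith)
  obtain ⟨B, hB⟩ := (isCompact_closedBall y0 R).exists_bound_of_continuousOn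
    (f := u) (fun x hx => (hdu x (hsub hx)).continuousAt.continuousWithinAt)
  obtain ⟨D, hD⟩ := (isCompact_closedBall y0 R).exists_bound_of_continuousOn
    (f := fderiv ℝ u) (fun x hx => (hddu x (hsub hx)).continuousAt.continuousWithinAt)
  have hmemc : ∀ t ≤ T, ∀ θ, y0 + polG t θ ∈ closedBall y0 R := by
    intro t ht θ
    rw [mem_closedBall, dist_eq_norm, add_sub_cancel_left, norm_polG, ← eT]
    exact Real.exp_le_exp.2 ht
  have hlim : ∀ t ≤ T, ∀ θ, |Wt t θ - 2| ≤ D * Real.exp t ∧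
      |W t θ - 2 * t - M| ≤ D * Real.exp t := by
    intro t ht θ
    constructor
    · have := ((fderiv ℝ u (y0 + polG t θ)).le_opNorm (polG t θ)).trans
        (mul_le_mul_of_nonneg_right (hD _ (hmemc t ht θ)) (norm_nonneg _))
      rw [norm_polG] at this
      simp only [hWt, add_sub_cancel_right]
      exact this
    · have := (convex_closedBall y0 R).norm_image_sub_le_of_norm_hasFDerivWithin_le
        (f := u) (f' := fderiv ℝ u) (C := D)
        (fun x hx => (hdu x (hsub hx)).hasFDerivWithinAt) hD
        (mem_closedBall_self hR.le) (hmemc t ht θ)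
      rw [add_sub_cancel_left, norm_polG, hM] at this
      simp only [hW, add_sub_cancel_right]
      exact this
  -- moving planes
  obtain ⟨A', hA'⟩ : ∃ A', A' = A / a := ⟨_, rfl⟩
  have hA'0 : 0 < A' := by rw [hA']; positivity
  have hA'a : a * A' = A := by rw [hA']; field_simp
  rw [← hA'] at hc4
  have hmp : ∀ t ≤ -M / 2 + C, ∀ θ, 0 ≤ Wt t θ - A' * Real.exp t := by
    refine moving_plane (w := fun t θ => W t θ - A' * Real.exp t)
      (wt := fun t θ => Wt t θ - A' * Real.exp t)
      (wtt := fun t θ => Wtt t θ - A' * Real.exp t) (wh := Wh) (whh := Whh) (T := T) (T1 := T1)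
      hTT hc2 ?_ ?_ ?_ h4 ?_ ?_ ?_ ?_ ?_ ?_
    · intro t ht θ
      exact (h1 t ht θ).sub ((Real.hasDerivAt_exp t).const_mul A')
    · intro t ht θ
      exact (h2 t ht θ).sub ((Real.hasDerivAt_exp t).const_mul A')
    · intro t ht θ
      exact (h3 t ht θ).sub_const _
    · intro p hp
      exact (hc p hp).sub (by fun_prop)
    · intro p hp
      exact (hct p hp).sub (by fun_prop)
    · intro t θ
      simp only [hWper]
    · intro s t θ hts hs hle
      have hs1 := hF s hs θ
      have ht1 := hF t (by linarith) θ
      have hη : 0 ≤ Real.exp s - Real.exp t := sub_nonneg.2 (Real.exp_le_exp.2 hts)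
      have hVV := hVL _ (hmem t (by linarith) θ) _ (hmem s hs θ)
      rw [add_sub_add_left_eq_sub, norm_polG_sub, abs_sub_comm (Real.exp t), abs_of_nonneg hη]
        at hVV
      have hVs := (hV _ (hmem s hs θ)).1
      have hVt := (hV _ (hmem t (by linarith) θ)).1
      have hVV' := (abs_le.1 hVV).2
      have hFF : F t θ ≤ F s θ := by
        simp only [hFdef]
        have k1 : Real.exp (W t θ) * (1 + A' * (Real.exp s - Real.exp t)) ≤ Real.exp (W s θ) := by
          have k2 := Real.add_one_le_exp (A' * (Real.exp s - Real.exp t))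
          calc _ ≤ Real.exp (W t θ) * Real.exp (A' * (Real.exp s - Real.exp t)) :=
                mul_le_mul_of_nonneg_left (by linarith) (Real.exp_pos _).le
            _ = Real.exp (W t θ + A' * (Real.exp s - Real.exp t)) := (Real.exp_add _ _).symm
            _ ≤ _ := Real.exp_le_exp.2 (by linarith)
        have k3 : V (y0 + polG t θ) ≤
            V (y0 + polG s θ) * (1 + A' * (Real.exp s - Real.exp t)) := by
          have k4 : a * (A' * (Real.exp s - Real.exp t)) ≤
              V (y0 + polG s θ) * (A' * (Real.exp s - Real.exp t)) :=
            mul_le_mul_of_nonneg_right hVs (by positivity)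
          have k5 : a * (A' * (Real.exp s - Real.exp t)) = A * (Real.exp s - Real.exp t) := by
            rw [← mul_assoc, hA'a]
          linarith
        calc _ ≤ V (y0 + polG s θ) * (1 + A' * (Real.exp s - Real.exp t)) * Real.exp (W t θ) :=
              mul_le_mul_of_nonneg_right k3 (Real.exp_pos _).le
          _ = V (y0 + polG s θ) * (Real.exp (W t θ) * (1 + A' * (Real.exp s - Real.exp t))) := by
              ring
          _ ≤ _ := mul_le_mul_of_nonneg_left k1 (by linarith)
      have : 0 ≤ A' * (Real.exp s - Real.exp t) := by positivity
      linarith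
    · intro l hl θ
      have k1 := hWup (2 * l - T) ((Real.exp_le_exp.2 (by linarith)).trans hc3) θ
      have k2 := hm _ (hmem T hTT θ)
      have k3 : W T θ = u (y0 + polG T θ) + 2 * T := by rw [hW]
      have k4 : 0 < A' * Real.exp (2 * l - T) := by positivity
      rw [eT]
      linarith
    · -- start
      obtain ⟨t0, ht0T, ht0⟩ : ∃ t0 ≤ T, ∀ t ≤ t0, ∀ θ, 0 ≤ Wt t θ - A' * Real.exp t := by
        have hl : Tendsto (fun t => (D + A') * Real.exp t) atBot (nhds 0) := by
          simpa using Real.tendsto_exp_atBot.const_mul (D + A')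
        have := (hl.eventually (gt_mem_nhds (show (0:ℝ) < 2 by norm_num))).and
          (eventually_le_atBot T)
        obtain ⟨t0, h0⟩ := eventually_atBot.1 this
        refine ⟨t0, (h0 t0 le_rfl).2, fun t ht θ => ?_⟩
        obtain ⟨k1, k2⟩ := h0 t ht
        have k3 := (abs_le.1 (hlim t k2 θ).1).1
        linarith
      refine ⟨min t0 ((-2 * B + 4 * t0 - A' * R) / 4), fun l hl t θ hta htb => ?_⟩
      have hl1 : l ≤ t0 := hl.trans (min_le_left _ _)
      have hl2 : l ≤ (-2 * B + 4 * t0 - A' * R) / 4 := hl.trans (min_le_right _ _)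
      rcases le_total (2 * l - t) t0 with hs | hs
      · exact mono_helper (h := fun t => W t θ - A' * Real.exp t)
          (h' := fun t => Wt t θ - A' * Real.exp t) (s := t) (t := 2 * l - t) (by linarith)
          (fun x _ hx => (h1 x (by linarith) θ).sub ((Real.hasDerivAt_exp x).const_mul A'))
          (fun x _ hx => ht0 x (by linarith) θ)
      · have k1 := (abs_le.1 (hB _ (hmemc (2 * l - t) (by linarith) θ))).1
        have k2 := (abs_le.1 (hB _ (hmemc t (by linarith) θ))).2
        have k3 : W t θ = u (y0 + polG t θ) + 2 * t := by rw [hW]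
        have k4 : W (2 * l - t) θ = u (y0 + polG (2 * l - t) θ) + 2 * (2 * l - t) := by rw [hW]
        have k5 : 0 < A' * Real.exp t := by positivity
        have k6 : A' * Real.exp (2 * l - t) ≤ A' * R := by
          rw [← eT]
          exact mul_le_mul_of_nonneg_left (Real.exp_le_exp.2 (by linarith)) hA'0.le
        linarith
  exact avg_contra ha hb h1 h2 h4 hc hct hctt hchh hWhper hF hFa hFb ⟨D, T, hlim⟩ hC
    (by linarith) (fun t ht θ => by
      have := hmp t ht θ
      have : 0 < A' * Real.exp t := by positivity
      linarith)

theorem stmt5 (Ω : Set E2) (hΩ : IsOpen Ω) (a b A : ℝ) (ha : 0 < a) (hab : a ≤ b)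
    (hA : 0 < A) (K : Set E2) (hK : IsCompact K) (hKΩ : K ⊆ Ω) :
    ∃ c : ℝ, ∀ V u : E2 → ℝ,
      (∀ x ∈ Ω, a ≤ V x ∧ V x ≤ b) →
      (∀ x ∈ Ω, ∀ y ∈ Ω, |V x - V y| ≤ A * ‖x - y‖) →
      ContDiffOn ℝ 2 u Ω →
      (∀ x ∈ Ω, -(lapl u x) = V x * Real.exp (u x)) →
      ∀ x ∈ K, ∀ ε : ℝ, 0 < ε → ∃ y ∈ Ω, u x + u y < c + ε := by
  obtain ⟨δ, hδ, hδΩ⟩ := hK.exists_cthickening_subset_open hΩ hKΩ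
  obtain ⟨R, hRdef⟩ : ∃ R, R = δ / 3 := ⟨_, rfl⟩
  have hR : 0 < R := by rw [hRdef]; linarith
  obtain ⟨C, hCdef⟩ : ∃ C, C = 3 * Real.exp b / a := ⟨_, rfl⟩
  have hC : 2 * Real.exp b / a < C := by
    rw [hCdef]
    have := Real.exp_pos b
    exact div_lt_div_of_pos_right (by linarith) ha
  have hC0 : 0 < C := lt_trans (by positivity) hC
  obtain ⟨LR, hLR⟩ : ∃ LR, LR = Real.log R := ⟨_, rfl⟩
  have hl2 : 0 < Real.log 2 := Real.log_pos (by norm_num)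
  have hl4 : Real.log 4 = 2 * Real.log 2 := by
    rw [show (4:ℝ) = 2 ^ 2 by norm_num, Real.log_pow]; norm_num
  have hAR : 0 < A / a * R := by positivity
  have habs1 := le_abs_self LR
  have habs2 := neg_abs_le LR
  obtain ⟨c, hcdef⟩ : ∃ c, c = 4 * C + 4 * Real.log 2 + 4 * |LR| + A / a * R + 1 := ⟨_, rfl⟩
  refine ⟨c, ?_⟩
  intro V u hV hVL hu heq x hx ε hε
  by_contra hcon
  push Not at hcon
  have hsubΩ : closedBall x (3 * R) ⊆ Ω := by
    refine Set.Subset.trans ?_ hδΩ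
    rw [hRdef, show 3 * (δ / 3) = δ by ring]
    exact closedBall_subset_cthickening hx δ
  have hxx := hcon x (hKΩ hx)
  -- selection
  have hcont : ContinuousOn (fun y => (R - ‖y - x‖) ^ 2 * Real.exp (u y)) (closedBall x R) := by
    have : ContinuousOn u (closedBall x R) :=
      hu.continuousOn.mono ((closedBall_subset_closedBall (by linarith)).trans hsubΩ)
    fun_prop
  obtain ⟨y0, hy0, hmax⟩ := (isCompact_closedBall x R).exists_isMaxOn
    ⟨x, mem_closedBall_self hR.le⟩ hcont
  have hmx : (R - ‖x - x‖) ^ 2 * Real.exp (u x) ≤ (R - ‖y0 - x‖) ^ 2 * Real.exp (u y0) :=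
    hmax (mem_closedBall_self hR.le)
  rw [sub_self, norm_zero, sub_zero] at hmx
  rw [mem_closedBall, dist_eq_norm] at hy0
  obtain ⟨d, hd⟩ : ∃ d, d = R - ‖y0 - x‖ := ⟨_, rfl⟩
  have hd0 : 0 < d := by
    rcases (show 0 ≤ d by rw [hd]; linarith).eq_or_lt with h | h
    · exfalso
      rw [← hd, ← h] at hmx
      have : 0 < R ^ 2 * Real.exp (u x) := by positivity
      norm_num at hmx
      linarith
    · exact h
  have hdR : d ≤ R := by rw [hd]; linarith [norm_nonneg (y0 - x)]
  rw [← hd] at hmx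
  have hlog : 2 * Real.log R + u x ≤ 2 * Real.log d + u y0 := by
    have := Real.log_le_log (by positivity) hmx
    rw [Real.log_mul (by positivity) (by positivity), Real.log_mul (by positivity) (by positivity),
      Real.log_pow, Real.log_pow, Real.log_exp, Real.log_exp] at this
    exact_mod_cast this
  have hlogd : Real.log d ≤ Real.log R := Real.log_le_log hd0 hdR
  rw [← hLR] at hlog hlogd
  have hb2 : ball y0 (2 * R) ⊆ Ω := by
    refine Set.Subset.trans ?_ hsubΩ
    intro z hz
    rw [mem_ball, dist_eq_norm] at hz
    rw [mem_closedBall, dist_eq_norm]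
    have := norm_sub_le_norm_sub_add_norm_sub z y0 x
    linarith
  have hed : d / 2 = Real.exp (Real.log d - Real.log 2) := by
    rw [Real.exp_sub, Real.exp_log hd0, Real.exp_log (by norm_num)]
  refine core (u := u) (V := V) (y0 := y0) (R := R) (a := a) (b := b) (A := A) (m := c - u x)
    (M := u y0) (r0 := d / 2) (C := C) hR ha hab hA (fun z hz => hV z (hb2 hz))
    (fun z hz z' hz' => hVL z (hb2 hz) z' (hb2 hz'))
    (fun z hz => hu.contDiffAt (hΩ.mem_nhds (hb2 hz))) (fun z hz => heq z (hb2 hz)) rfl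
    (fun z hz => by linarith [hcon z (hb2 hz)]) ?_ hC ?_ ?_ ?_ ?_
  · intro z hz
    have h1 := norm_sub_le_norm_sub_add_norm_sub z y0 x
    have h2 : d / 2 ≤ R - ‖z - x‖ := by linarith
    have h3 : (R - ‖z - x‖) ^ 2 * Real.exp (u z) ≤ (R - ‖y0 - x‖) ^ 2 * Real.exp (u y0) :=
      hmax (show z ∈ closedBall x R by rw [mem_closedBall, dist_eq_norm]; linarith)
    rw [← hd] at h3
    have h4 : (d / 2) ^ 2 ≤ (R - ‖z - x‖) ^ 2 := pow_le_pow_left₀ (by positivity) h2 2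
    have h5 : (d / 2) ^ 2 * Real.exp (u z) ≤ d ^ 2 * Real.exp (u y0) :=
      (mul_le_mul_of_nonneg_right h4 (Real.exp_pos _).le).trans h3
    have h6 := Real.log_le_log (by positivity) h5
    rw [Real.log_mul (by positivity) (by positivity), Real.log_mul (by positivity) (by positivity),
      Real.log_pow, Real.log_pow, Real.log_exp, Real.log_exp,
      Real.log_div hd0.ne' (by norm_num)] at h6
    push_cast at h6
    linarith
  · rw [hed]
    exact Real.exp_le_exp.2 (by linarith)
  · rw [← hLR]; linarith
  · rw [hed, ← hLR]
    exact Real.exp_le_exp.2 (by linarith)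
  · rw [← hLR]; linarith
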